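/- Let γ ∈ (0,2), p ∈ [1,∞), and let b be the γ-anti-tree over (X, m) with counting measure m ≡ 1 and intrinsic degree path metric ρ. Then there exists C ≥ 1 such that for all x ∈ X and all r ≥ max(1, ρ(x,o)): C⁻¹ · r^{2γ/(2−γ)} ≤ D_p(x,r) ≤ C · r^{2γ/(2−γ)}, where D_p(x,r) := ( (1/#B_x(r)) Σ_{y∈B_x(r)} Deg(y)^p )^{1/p}. -/

import Mathlib

open scoped BigOperators

/-- Vertex set of the anti-tree with sphere function `s`:
the `k`-th sphere has `s k` elements. -/
def AntiTree (s : ℕ → ℕ) : Type := Σ k : ℕ, Fin (s k)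

namespace AntiTree

/-- Standard edge weights of the anti-tree: consecutive spheres are completely connected,
and there are no other edges. -/
def wt (s : ℕ → ℕ) (x y : AntiTree s) : ℝ :=
  if x.1 + 1 = y.1 ∨ y.1 + 1 = x.1 then 1 else 0

/-- Weighted vertex degree with respect to the counting measure `m ≡ 1`. -/
noncomputable def Deg (s : ℕ → ℕ) (x : AntiTree s) : ℝ := ∑' y : AntiTree s, wt s x y

end AntiTree

/-- Intrinsic degree path (pseudo-)metric of a weighted graph `b` whose weighted degree
function is `D`:  `ρ(x,y)` is the infimum over finite paths from `x` to `y` of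
`∑_j min(1/D(x_j), 1/D(x_{j+1}))^{1/2}`. -/
noncomputable def pathMetric {X : Type*} (b : X → X → ℝ) (D : X → ℝ) (x y : X) : ℝ :=
  sInf { L : ℝ | ∃ (k : ℕ) (p : ℕ → X), p 0 = x ∧ p k = y ∧
    (∀ j < k, 0 < b (p j) (p (j + 1))) ∧
    L = ∑ j ∈ Finset.range k, Real.sqrt (min (1 / D (p j)) (1 / D (p (j + 1)))) }

/-- The intrinsic degree path metric of the anti-tree. -/
noncomputable def AntiTree.rho (s : ℕ → ℕ) : AntiTree s → AntiTree s → ℝ :=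
  pathMetric (AntiTree.wt s) (AntiTree.Deg s)

/-- Closed balls with respect to the intrinsic degree path metric. -/
noncomputable def AntiTree.ball (s : ℕ → ℕ) (x : AntiTree s) (r : ℝ) : Set (AntiTree s) :=
  {y | AntiTree.rho s x y ≤ r}

/-- The sphere function of the `γ`-anti-tree: `s (k-1) = ⌊k ^ γ⌋` for `k ≥ 1`,
i.e. `s k = ⌊(k+1) ^ γ⌋`. -/
noncomputable def gammaSphere (γ : ℝ) : ℕ → ℕ := fun k => ⌊((k : ℝ) + 1) ^ γ⌋₊

section PathMetric

variable {X : Type*} (b : X → X → ℝ) (D : X → ℝ)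

/-- `L` is the length of some path from `x` to `y`. -/
def IsPathLength (x y : X) (L : ℝ) : Prop :=
  ∃ (k : ℕ) (p : ℕ → X), p 0 = x ∧ p k = y ∧
    (∀ j < k, 0 < b (p j) (p (j + 1))) ∧
    L = ∑ j ∈ Finset.range k, Real.sqrt (min (1 / D (p j)) (1 / D (p (j + 1))))

variable {b D}

theorem IsPathLength.refl (x : X) : IsPathLength b D x x 0 :=
  ⟨0, fun _ => x, rfl, rfl, by simp, by simp⟩

theorem IsPathLength.cons {x z y : X} {L : ℝ} (hxz : 0 < b x z) (h : IsPathLength b D z y L) :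
    IsPathLength b D x y (L + Real.sqrt (min (1 / D x) (1 / D z))) := by
  obtain ⟨k, p, h0, hk, hb, hL⟩ := h
  refine ⟨k + 1, fun n => Nat.casesOn n x p, rfl, hk, ?_, ?_⟩
  · rintro (_ | j) hj
    · simpa [h0] using hxz
    · exact hb j (by omega)
  · rw [Finset.sum_range_succ', hL]
    simp [h0]

theorem IsPathLength.exists_of_reflTransGen {x y : X}
    (h : Relation.ReflTransGen (fun u v => 0 < b u v) x y) : ∃ L, IsPathLength b D x y L := by
  induction h using Relation.ReflTransGen.head_induction_on with
  | refl => exact ⟨0, .refl y⟩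
  | head hxz _ ih =>
    obtain ⟨L, hL⟩ := ih
    exact ⟨_, hL.cons hxz⟩

theorem pathMetric_le {x y : X} {L : ℝ} (h : IsPathLength b D x y L) :
    pathMetric b D x y ≤ L := by
  refine csInf_le ⟨0, ?_⟩ h
  rintro _ ⟨k, p, -, -, -, rfl⟩
  exact Finset.sum_nonneg fun _ _ => Real.sqrt_nonneg _

/-- A function which varies by at most `c` times the length of each edge is `c`-Lipschitz
for the path metric. -/
theorem sub_le_mul_pathMetric {f : X → ℝ} {c : ℝ} (hc : 0 < c)
    (hf : ∀ u v, 0 < b u v → f v - f u ≤ c * Real.sqrt (min (1 / D u) (1 / D v)))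
    {x y : X} (hxy : ∃ L, IsPathLength b D x y L) :
    f y - f x ≤ c * pathMetric b D x y := by
  rw [← div_le_iff₀' hc]
  refine le_csInf hxy ?_
  rintro _ ⟨k, p, rfl, rfl, hb, rfl⟩
  rw [div_le_iff₀' hc, Finset.mul_sum, ← Finset.sum_range_sub (fun j => f (p j))]
  exact Finset.sum_le_sum fun j hj => hf _ _ (hb j (Finset.mem_range.1 hj))

end PathMetric

namespace AntiTree

variable {s : ℕ → ℕ}

/-- The vertices in the spheres with index in `t`. -/
def spheres (s : ℕ → ℕ) (t : Finset ℕ) : Finset (AntiTree s) :=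
  t.sigma fun _ => Finset.univ

theorem mem_spheres {t : Finset ℕ} {x : AntiTree s} : x ∈ spheres s t ↔ x.1 ∈ t := by
  unfold spheres
  exact Finset.mem_sigma.trans (by simp)

theorem card_spheres (t : Finset ℕ) : (spheres s t).card = ∑ k ∈ t, s k := by
  unfold spheres
  exact (Finset.card_sigma _ _).trans (by simp)

theorem Deg_eq (x : AntiTree s) :
    Deg s x = s (x.1 + 1) + if x.1 = 0 then 0 else (s (x.1 - 1) : ℝ) := by
  have h1 : Deg s x = ∑ y ∈ spheres s (Finset.range (x.1 + 2)), wt s x y := by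
    refine tsum_eq_sum fun y hy => ?_
    rw [mem_spheres, Finset.mem_range] at hy
    exact if_neg (by omega)
  have h2 : Deg s x = ∑ k ∈ Finset.range (x.1 + 2),
      (s k : ℝ) * if x.1 + 1 = k ∨ k + 1 = x.1 then 1 else 0 := by
    rw [h1]
    refine (Finset.sum_sigma _ _ _).trans (Finset.sum_congr rfl fun k _ => ?_)
    have h (e : ℝ) : ∑ _i : Fin (s k), e = s k * e := by simp
    exact h (if x.1 + 1 = k ∨ k + 1 = x.1 then 1 else 0)
  rw [h2]
  generalize x.1 = n
  rcases n with _ | n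
  · simp
  · rw [Finset.sum_range_succ, Finset.sum_range_succ, Finset.sum_range_succ,
      Finset.sum_eq_zero]
    · simp [add_comm (s n : ℝ)]
    · intro k hk
      rw [Finset.mem_range] at hk
      rw [if_neg (by omega), mul_zero]

theorem wt_pos_iff {x y : AntiTree s} : 0 < wt s x y ↔ x.1 + 1 = y.1 ∨ y.1 + 1 = x.1 := by
  unfold wt
  split_ifs with h <;> simp [h]

theorem reflTransGen_root (h0 : s 0 = 1) (hs : ∀ k, 0 < s k) {o : AntiTree s} (ho : o.1 = 0)
    (x : AntiTree s) : Relation.ReflTransGen (fun u v => 0 < wt s u v) x o := by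
  obtain ⟨k, i⟩ := x
  induction k with
  | zero =>
    obtain ⟨l, j⟩ := o
    obtain rfl : l = 0 := ho
    have : Subsingleton (Fin (s 0)) := by rw [h0]; infer_instance
    rw [Subsingleton.elim i j]
    exact .refl
  | succ k ih => exact .head (wt_pos_iff.2 (Or.inr rfl)) (ih ⟨0, hs k⟩)

theorem exists_isPathLength (h0 : s 0 = 1) (hs : ∀ k, 0 < s k) {o : AntiTree s} (ho : o.1 = 0)
    (D : AntiTree s → ℝ) (x y : AntiTree s) : ∃ L, IsPathLength (wt s) D x y L := by
  refine IsPathLength.exists_of_reflTransGen ((reflTransGen_root h0 hs ho x).trans ?_)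
  have hsymm : Std.Symm (fun u v : AntiTree s => 0 < wt s u v) :=
    ⟨fun u v h => wt_pos_iff.2 (wt_pos_iff.1 h).symm⟩
  exact symm_of (Relation.ReflTransGen _) (reflTransGen_root h0 hs ho y)

/-- Ascending paths: if `g` bounds the lengths of edges by its increments, it does so for
distances between different spheres. -/
theorem rho_le_of_lt (hs : ∀ k, 0 < s k) {g : ℕ → ℝ}
    (hg : ∀ u v : AntiTree s, u.1 + 1 = v.1 →
      Real.sqrt (min (1 / Deg s u) (1 / Deg s v)) ≤ g v.1 - g u.1)
    {x y : AntiTree s} (hxy : x.1 < y.1) : rho s x y ≤ g y.1 - g x.1 := by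
  suffices H : ∀ (d : ℕ) (x : AntiTree s), x.1 + d + 1 = y.1 →
      ∃ L, IsPathLength (wt s) (Deg s) x y L ∧ L ≤ g y.1 - g x.1 by
    obtain ⟨L, hL, hle⟩ := H (y.1 - x.1 - 1) x (by omega)
    exact (pathMetric_le hL).trans hle
  intro d
  induction d with
  | zero =>
    intro x hx
    refine ⟨_, (IsPathLength.refl y).cons (wt_pos_iff.2 (Or.inl hx)), ?_⟩
    rw [zero_add]
    exact hg x y hx
  | succ d ih =>
    intro x hx
    let z : AntiTree s := ⟨x.1 + 1, ⟨0, hs _⟩⟩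
    obtain ⟨L, hL, hle⟩ := ih z (by change x.1 + 1 + d + 1 = y.1; omega)
    refine ⟨_, hL.cons (wt_pos_iff.2 (Or.inl (rfl : x.1 + 1 = z.1))), ?_⟩
    linarith [hg x z rfl]

end AntiTree

section Rpow

theorem rpow_add_one_sub_rpow_le {x β : ℝ} (hx : 0 < x) (hβ : β ≤ 1) :
    (x + 1) ^ β - x ^ β ≤ x ^ (β - 1) := by
  have h1 : (x + 1) ^ (β - 1) ≤ x ^ (β - 1) :=
    Real.rpow_le_rpow_of_nonpos hx (by linarith) (by linarith)
  have h2 : (x + 1) ^ β = (x + 1) ^ (β - 1) * (x + 1) := by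
    rw [← Real.rpow_add_one (by positivity), sub_add_cancel]
  have h3 : x ^ β = x ^ (β - 1) * x := by
    rw [← Real.rpow_add_one hx.ne', sub_add_cancel]
  rw [h2, h3]
  nlinarith

theorem mul_rpow_le_rpow_add_one_sub_rpow {x β : ℝ} (hx : 0 < x) (hβ0 : 0 ≤ β) (hβ : β ≤ 1) :
    β * (x + 1) ^ (β - 1) ≤ (x + 1) ^ β - x ^ β := by
  have hx1 : 0 < x + 1 := by linarith
  have h1 : (1 + -(1 / (x + 1))) ^ β ≤ 1 + β * -(1 / (x + 1)) := by
    refine rpow_one_add_le_one_add_mul_self ?_ hβ0 hβ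
    rw [neg_le_neg_iff, div_le_one hx1]
    linarith
  have h2 : x ^ β = (x + 1) ^ β * (1 + -(1 / (x + 1))) ^ β := by
    have h : 1 + -(1 / (x + 1)) = x / (x + 1) := by field_simp; ring
    rw [h, ← Real.mul_rpow hx1.le (by positivity), mul_div_cancel₀ _ hx1.ne']
  have h3 : (x + 1) ^ (β - 1) = (x + 1) ^ β * (1 / (x + 1)) := by
    rw [Real.rpow_sub_one hx1.ne', mul_one_div]
  have h4 := mul_le_mul_of_nonneg_left h1 (Real.rpow_nonneg hx1.le β)
  rw [h2, h3]
  linarith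

end Rpow

section GammaSphere

variable {γ : ℝ}

theorem gammaSphere_zero : gammaSphere γ 0 = 1 := by simp [gammaSphere]

theorem gammaSphere_le (k : ℕ) : (gammaSphere γ k : ℝ) ≤ ((k : ℝ) + 1) ^ γ :=
  Nat.floor_le (by positivity)

theorem half_rpow_le_gammaSphere (hγ : 0 ≤ γ) (k : ℕ) :
    ((k : ℝ) + 1) ^ γ / 2 ≤ gammaSphere γ k := by
  have h1 : (1 : ℝ) ≤ ((k : ℝ) + 1) ^ γ := Real.one_le_rpow (by simp) hγ
  have h2 : (1 : ℝ) ≤ gammaSphere γ k := by 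
    exact Nat.one_le_cast.2 ((Nat.one_le_floor_iff _).2 h1)
  have h3 : ((k : ℝ) + 1) ^ γ < gammaSphere γ k + 1 := Nat.lt_floor_add_one _
  linarith

theorem gammaSphere_pos (hγ : 0 ≤ γ) (k : ℕ) : 0 < gammaSphere γ k := by
  have h := half_rpow_le_gammaSphere hγ k
  have : (0 : ℝ) < gammaSphere γ k := lt_of_lt_of_le (by positivity) h
  exact_mod_cast this

theorem half_rpow_le_Deg (hγ : 0 ≤ γ) (x : AntiTree (gammaSphere γ)) :
    ((x.1 : ℝ) + 2) ^ γ / 2 ≤ AntiTree.Deg (gammaSphere γ) x := by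
  have h := half_rpow_le_gammaSphere hγ (x.1 + 1)
  have h0 : (0 : ℝ) ≤ if x.1 = 0 then 0 else (gammaSphere γ (x.1 - 1) : ℝ) := by
    split_ifs <;> positivity
  rw [AntiTree.Deg_eq]
  push_cast at h
  rw [add_assoc, one_add_one_eq_two] at h
  linarith

theorem Deg_pos (hγ : 0 ≤ γ) (x : AntiTree (gammaSphere γ)) :
    0 < AntiTree.Deg (gammaSphere γ) x :=
  lt_of_lt_of_le (by positivity) (half_rpow_le_Deg hγ x)

theorem Deg_le (hγ : 0 ≤ γ) (x : AntiTree (gammaSphere γ)) :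
    AntiTree.Deg (gammaSphere γ) x ≤ 2 * ((x.1 : ℝ) + 2) ^ γ := by
  have h := gammaSphere_le (γ := γ) (x.1 + 1)
  have h0 : (if x.1 = 0 then 0 else (gammaSphere γ (x.1 - 1) : ℝ)) ≤ ((x.1 : ℝ) + 2) ^ γ := by
    split_ifs with hx
    · positivity
    · refine (gammaSphere_le _).trans (Real.rpow_le_rpow (by positivity) ?_ hγ)
      rw [Nat.cast_pred (Nat.pos_of_ne_zero hx)]
      linarith
  rw [AntiTree.Deg_eq]
  push_cast at h
  rw [add_assoc, one_add_one_eq_two] at h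
  linarith

theorem Deg_le_mul_rpow (hγ : 0 ≤ γ) (hγ2 : γ ≤ 2) (x : AntiTree (gammaSphere γ)) {t : ℝ}
    (ht : 1 ≤ t) (hx : (x.1 : ℝ) + 2 ≤ 3 * t) :
    AntiTree.Deg (gammaSphere γ) x ≤ 18 * t ^ γ := by
  have h3 : (3 : ℝ) ^ γ ≤ 9 := by
    calc (3 : ℝ) ^ γ ≤ 3 ^ (2 : ℝ) := Real.rpow_le_rpow_of_exponent_le (by norm_num) hγ2
      _ = 9 := by norm_num
  calc AntiTree.Deg (gammaSphere γ) x ≤ 2 * ((x.1 : ℝ) + 2) ^ γ := Deg_le hγ x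
    _ ≤ 2 * (3 * t) ^ γ := by gcongr
    _ = 2 * (3 ^ γ * t ^ γ) := by rw [Real.mul_rpow (by norm_num) (by linarith)]
    _ ≤ 2 * (9 * t ^ γ) := by gcongr
    _ = 18 * t ^ γ := by ring

theorem sqrt_one_div_mul_rpow {c t : ℝ} (ht : 0 < t) :
    Real.sqrt (1 / (c ^ 2 * t ^ γ)) = 1 / |c| * t ^ (1 - γ / 2 - 1) := by
  have h : 1 / (c ^ 2 * t ^ γ) = (1 / |c| * t ^ (1 - γ / 2 - 1)) ^ 2 := by
    rw [mul_pow, div_pow, sq_abs, ← Real.rpow_natCast (t ^ _), ← Real.rpow_mul ht.le]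
    have : (1 - γ / 2 - 1) * ((2 : ℕ) : ℝ) = -γ := by push_cast; ring
    rw [this, Real.rpow_neg ht.le, one_pow, ← one_div, one_div_mul_one_div]
  rw [h, Real.sqrt_sq (by positivity)]

theorem rpow_sub_le_edge (hγ : 0 ≤ γ) (hγ2 : γ ≤ 2) {u v : AntiTree (gammaSphere γ)}
    (huv : u.1 + 1 = v.1) :
    ((v.1 : ℝ) + 1) ^ (1 - γ / 2) - ((u.1 : ℝ) + 1) ^ (1 - γ / 2) ≤
      6 * Real.sqrt (min (1 / AntiTree.Deg (gammaSphere γ) u)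
        (1 / AntiTree.Deg (gammaSphere γ) v)) := by
  have hv : (v.1 : ℝ) = u.1 + 1 := by rw [← huv]; push_cast; ring
  have ht : (1 : ℝ) ≤ (u.1 : ℝ) + 1 := by simp
  have ht0 : (0 : ℝ) < (u.1 : ℝ) + 1 := by positivity
  have hP : 0 < ((u.1 : ℝ) + 1) ^ γ := by positivity
  have h1 : Real.sqrt (1 / (6 ^ 2 * ((u.1 : ℝ) + 1) ^ γ)) ≤
      Real.sqrt (min (1 / AntiTree.Deg (gammaSphere γ) u)
        (1 / AntiTree.Deg (gammaSphere γ) v)) := by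
    refine Real.sqrt_le_sqrt (le_min ?_ ?_)
    · refine one_div_le_one_div_of_le (Deg_pos hγ u) ?_
      have := Deg_le_mul_rpow hγ hγ2 u ht (by linarith)
      linarith
    · refine one_div_le_one_div_of_le (Deg_pos hγ v) ?_
      have := Deg_le_mul_rpow hγ hγ2 v ht (by linarith)
      linarith
  rw [sqrt_one_div_mul_rpow ht0, abs_of_pos (by norm_num : (0 : ℝ) < 6)] at h1
  have h2 := rpow_add_one_sub_rpow_le ht0 (by linarith : 1 - γ / 2 ≤ 1)
  rw [hv]
  linarith

theorem edge_le_rpow_sub (hγ : 0 ≤ γ) (hγ2 : γ < 2) {u v : AntiTree (gammaSphere γ)}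
    (huv : u.1 + 1 = v.1) :
    Real.sqrt (min (1 / AntiTree.Deg (gammaSphere γ) u)
        (1 / AntiTree.Deg (gammaSphere γ) v)) ≤
      2 / (1 - γ / 2) * ((v.1 : ℝ) + 1) ^ (1 - γ / 2) -
        2 / (1 - γ / 2) * ((u.1 : ℝ) + 1) ^ (1 - γ / 2) := by
  have hv : (v.1 : ℝ) = u.1 + 1 := by rw [← huv]; push_cast; ring
  have hβ : 0 < 1 - γ / 2 := by linarith
  have ht0 : (0 : ℝ) < (u.1 : ℝ) + 1 := by positivity
  have h1 : Real.sqrt (min (1 / AntiTree.Deg (gammaSphere γ) u)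
        (1 / AntiTree.Deg (gammaSphere γ) v)) ≤
      Real.sqrt (1 / ((1 / 2) ^ 2 * ((u.1 : ℝ) + 1 + 1) ^ γ)) := by
    refine Real.sqrt_le_sqrt ((min_le_left _ _).trans ?_)
    refine one_div_le_one_div_of_le (by positivity) ?_
    have := half_rpow_le_Deg hγ u
    have hP : 0 < ((u.1 : ℝ) + 1 + 1) ^ γ := by positivity
    rw [show (u.1 : ℝ) + 2 = u.1 + 1 + 1 by ring] at this
    linarith
  rw [sqrt_one_div_mul_rpow (by positivity), abs_of_pos (by norm_num : (0 : ℝ) < 1 / 2)] at h1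
  have h2 := mul_rpow_le_rpow_add_one_sub_rpow ht0 hβ.le (by linarith)
  rw [hv, ← mul_sub]
  calc _ ≤ _ := h1
    _ = 2 / (1 - γ / 2) * ((1 - γ / 2) * ((u.1 : ℝ) + 1 + 1) ^ (1 - γ / 2 - 1)) := by
      rw [← mul_assoc, div_mul_cancel₀ _ hβ.ne', one_div_one_div]
    _ ≤ _ := by gcongr

theorem rpow_sub_le_rho (hγ : 0 ≤ γ) (hγ2 : γ ≤ 2) {o : AntiTree (gammaSphere γ)} (ho : o.1 = 0)
    (x y : AntiTree (gammaSphere γ)) :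
    |((y.1 : ℝ) + 1) ^ (1 - γ / 2) - ((x.1 : ℝ) + 1) ^ (1 - γ / 2)| ≤
      6 * AntiTree.rho (gammaSphere γ) x y := by
  have hpath := AntiTree.exists_isPathLength (s := gammaSphere γ) gammaSphere_zero
    (gammaSphere_pos hγ) ho (AntiTree.Deg (gammaSphere γ)) x y
  refine abs_sub_le_iff.2 ⟨?_, ?_⟩
  · refine sub_le_mul_pathMetric
      (f := fun z : AntiTree (gammaSphere γ) => ((z.1 : ℝ) + 1) ^ (1 - γ / 2))
      (by norm_num) (fun u v huv => ?_) hpath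
    rcases AntiTree.wt_pos_iff.1 huv with h | h
    · exact rpow_sub_le_edge hγ hγ2 h
    · have h1 : ((v.1 : ℝ) + 1) ^ (1 - γ / 2) ≤ ((u.1 : ℝ) + 1) ^ (1 - γ / 2) := by
        refine Real.rpow_le_rpow (by positivity) ?_ (by linarith)
        rw [← h]; push_cast; linarith
      exact (sub_nonpos.2 h1).trans (by positivity)
  · rw [← neg_sub_neg]
    refine sub_le_mul_pathMetric
      (f := fun z : AntiTree (gammaSphere γ) => -((z.1 : ℝ) + 1) ^ (1 - γ / 2))
      (by norm_num) (fun u v huv => ?_) hpath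
    rw [neg_sub_neg]
    rcases AntiTree.wt_pos_iff.1 huv with h | h
    · have h1 : ((u.1 : ℝ) + 1) ^ (1 - γ / 2) ≤ ((v.1 : ℝ) + 1) ^ (1 - γ / 2) := by
        refine Real.rpow_le_rpow (by positivity) ?_ (by linarith)
        rw [← h]; push_cast; linarith
      exact (sub_nonpos.2 h1).trans (by positivity)
    · rw [min_comm]
      exact rpow_sub_le_edge hγ hγ2 h

theorem card_spheres_range_le (hγ : 0 ≤ γ) (n : ℕ) :
    ((AntiTree.spheres (gammaSphere γ) (Finset.range n)).card : ℝ) ≤ n * (n : ℝ) ^ γ := by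
  rw [AntiTree.card_spheres, Nat.cast_sum]
  refine (Finset.sum_le_card_nsmul _ _ ((n : ℝ) ^ γ) fun k hk => ?_).trans (by simp)
  refine (gammaSphere_le k).trans (Real.rpow_le_rpow (by positivity) ?_ hγ)
  exact_mod_cast Finset.mem_range.1 hk

theorem mul_rpow_le_card_of_eq_ball (hγ : 0 ≤ γ) (hγ2 : γ < 2) {x : AntiTree (gammaSphere γ)}
    {r : ℝ} {F : Finset (AntiTree (gammaSphere γ))}
    (hF : (F : Set (AntiTree (gammaSphere γ))) = AntiTree.ball (gammaSphere γ) x r) {n : ℕ}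
    (hn : 4 / (1 - γ / 2) * (n : ℝ) ^ (1 - γ / 2) ≤ r) :
    n * ((n : ℝ) ^ γ / 2) ≤ F.card := by
  have hβ : 0 < 1 - γ / 2 := by linarith
  set m := max (x.1 + 1) n with hm
  have hsub : AntiTree.spheres (gammaSphere γ) (Finset.Ico m (m + n)) ⊆ F := by
    intro y hy
    rw [AntiTree.mem_spheres, Finset.mem_Ico] at hy
    have hmx : x.1 + 1 ≤ m := le_max_left _ _
    rw [← Finset.mem_coe, hF]
    have h1 := AntiTree.rho_le_of_lt (gammaSphere_pos hγ)
      (g := fun k => 2 / (1 - γ / 2) * ((k : ℝ) + 1) ^ (1 - γ / 2))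
      (fun u v huv => edge_le_rpow_sub hγ hγ2 huv) (x := x) (y := y) (by omega)
    have h2 : ((y.1 : ℝ) + 1) ^ (1 - γ / 2) ≤ ((m : ℝ) + n) ^ (1 - γ / 2) := by
      refine Real.rpow_le_rpow (by positivity) ?_ hβ.le
      exact_mod_cast hy.2
    have h3 : ((m : ℝ) + n) ^ (1 - γ / 2) ≤ (m : ℝ) ^ (1 - γ / 2) + (n : ℝ) ^ (1 - γ / 2) :=
      Real.rpow_add_le_add_rpow (by positivity) (by positivity) hβ.le (by linarith)
    have h4 : (m : ℝ) ^ (1 - γ / 2) ≤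
        ((x.1 : ℝ) + 1) ^ (1 - γ / 2) + (n : ℝ) ^ (1 - γ / 2) := by
      have hx0 : (0 : ℝ) ≤ ((x.1 : ℝ) + 1) ^ (1 - γ / 2) := by positivity
      have hn0 : (0 : ℝ) ≤ (n : ℝ) ^ (1 - γ / 2) := by positivity
      rcases max_choice (x.1 + 1) n with h | h
      · rw [hm, h]; push_cast; linarith
      · rw [hm, h]; linarith
    change AntiTree.rho (gammaSphere γ) x y ≤ r
    have h5 := mul_le_mul_of_nonneg_left (h2.trans (h3.trans (add_le_add_left h4 _)))
      (by positivity : 0 ≤ 2 / (1 - γ / 2))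
    have h6 : 4 / (1 - γ / 2) = 2 * (2 / (1 - γ / 2)) := by ring
    rw [h6] at hn
    linarith
  calc n * ((n : ℝ) ^ γ / 2) = (Finset.Ico m (m + n)).card • ((n : ℝ) ^ γ / 2) := by simp
    _ ≤ ∑ k ∈ Finset.Ico m (m + n), (gammaSphere γ k : ℝ) := by
      refine Finset.card_nsmul_le_sum _ _ _ fun k hk => ?_
      refine le_trans ?_ (half_rpow_le_gammaSphere hγ k)
      have : (n : ℝ) ≤ (k : ℝ) + 1 := by
        have : n ≤ k + 1 := (le_max_right _ _).trans ((Finset.mem_Ico.1 hk).1.trans k.le_succ)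
        exact_mod_cast this
      gcongr
    _ ≤ F.card := by
      rw [← Nat.cast_sum, ← AntiTree.card_spheres]
      exact_mod_cast Finset.card_le_card hsub

/-- Volume growth of balls, with `K` a fixed multiple of `r ^ (1 / (1 - γ / 2))`. -/
theorem volume_le_card_of_eq_ball (hγ : 0 ≤ γ) (hγ2 : γ < 2) {x : AntiTree (gammaSphere γ)}
    {r K : ℝ} {F : Finset (AntiTree (gammaSphere γ))} (hF0 : F.Nonempty)
    (hF : (F : Set (AntiTree (gammaSphere γ))) = AntiTree.ball (gammaSphere γ) x r)
    (hK0 : 0 ≤ K) (hK : 4 / (1 - γ / 2) * K ^ (1 - γ / 2) ≤ r) :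
    K / 2 * ((K / 2) ^ γ / 2) ≤ F.card := by
  have hβ : 0 < 1 - γ / 2 := by linarith
  rcases lt_or_ge K 1 with h | h
  · have h1 : (K / 2) ^ γ ≤ 1 := Real.rpow_le_one (by positivity) (by linarith) hγ
    have h2 : (1 : ℝ) ≤ F.card := by exact_mod_cast hF0.card_pos
    have h3 : 0 ≤ (K / 2) ^ γ := by positivity
    nlinarith
  · have h1 : (1 : ℝ) ≤ ⌊K⌋₊ := by exact_mod_cast (Nat.one_le_floor_iff _).2 h
    have h2 : K / 2 ≤ ⌊K⌋₊ := by linarith [Nat.lt_floor_add_one K]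
    have h3 : (⌊K⌋₊ : ℝ) ≤ K := Nat.floor_le hK0
    calc K / 2 * ((K / 2) ^ γ / 2) ≤ ⌊K⌋₊ * ((⌊K⌋₊ : ℝ) ^ γ / 2) := by gcongr
      _ ≤ F.card := by
        refine mul_rpow_le_card_of_eq_ball hγ hγ2 hF (le_trans ?_ hK)
        gcongr

/-- At least half of the vertices of a ball have large degree. -/
theorem half_card_mul_le_sum_Deg (hγ : 0 ≤ γ) {K p : ℝ} (hp : 0 ≤ p) (hK0 : 0 ≤ K)
    {F : Finset (AntiTree (gammaSphere γ))} (hF : K / 2 * ((K / 2) ^ γ / 2) ≤ F.card) :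
    (F.card : ℝ) / 2 * ((K / 8) ^ γ / 2) ^ p ≤
      ∑ y ∈ F, AntiTree.Deg (gammaSphere γ) y ^ p := by
  classical
  set G := AntiTree.spheres (gammaSphere γ) (Finset.range ⌊K / 8⌋₊) with hG
  have h1 : (G.card : ℝ) ≤ F.card / 2 := by
    have h2 : (⌊K / 8⌋₊ : ℝ) ≤ K / 8 := Nat.floor_le (by positivity)
    have h3 : (K / 8) ^ γ ≤ (K / 2) ^ γ :=
      Real.rpow_le_rpow (by positivity) (by linarith) hγ
    calc (G.card : ℝ) ≤ ⌊K / 8⌋₊ * (⌊K / 8⌋₊ : ℝ) ^ γ := card_spheres_range_le hγ _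
      _ ≤ K / 8 * (K / 8) ^ γ := by gcongr
      _ ≤ K / 8 * (K / 2) ^ γ := by gcongr
      _ = K / 2 * ((K / 2) ^ γ / 2) / 2 := by ring
      _ ≤ F.card / 2 := by gcongr
  have h2 : (F.card : ℝ) ≤ (F \ G).card + G.card := by
    exact_mod_cast (Finset.card_le_card_sdiff_add_card : F.card ≤ _)
  calc (F.card : ℝ) / 2 * ((K / 8) ^ γ / 2) ^ p
      ≤ (F \ G).card * ((K / 8) ^ γ / 2) ^ p := by gcongr; linarith
    _ = (F \ G).card • ((K / 8) ^ γ / 2) ^ p := by rw [nsmul_eq_mul]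
    _ ≤ ∑ y ∈ F \ G, AntiTree.Deg (gammaSphere γ) y ^ p := by
      refine Finset.card_nsmul_le_sum _ _ _ fun y hy => ?_
      have hyG := (Finset.mem_sdiff.1 hy).2
      rw [hG, AntiTree.mem_spheres, Finset.mem_range, not_lt] at hyG
      have h3 : K / 8 ≤ (y.1 : ℝ) + 2 := by
        have : ((⌊K / 8⌋₊ : ℕ) : ℝ) ≤ y.1 := by exact_mod_cast hyG
        linarith [Nat.lt_floor_add_one (K / 8)]
      refine Real.rpow_le_rpow (by positivity) ?_ hp
      refine le_trans ?_ (half_rpow_le_Deg hγ y)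
      gcongr
    _ ≤ ∑ y ∈ F, AntiTree.Deg (gammaSphere γ) y ^ p :=
      Finset.sum_le_sum_of_subset_of_nonneg Finset.sdiff_subset fun y _ _ =>
        Real.rpow_nonneg (Deg_pos hγ y).le p

theorem add_one_le_of_mem_ball (hγ : 0 ≤ γ) (hγ2 : γ < 2) {o : AntiTree (gammaSphere γ)}
    (ho : o.1 = 0) {x y : AntiTree (gammaSphere γ)} {r : ℝ} (hr : 1 ≤ r)
    (hx : AntiTree.rho (gammaSphere γ) x o ≤ r) (hy : y ∈ AntiTree.ball (gammaSphere γ) x r) :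
    (y.1 : ℝ) + 1 ≤ (13 * r) ^ (1 / (1 - γ / 2)) := by
  have hβ : 0 < 1 - γ / 2 := by linarith
  have h1 := (abs_sub_le_iff.1 (rpow_sub_le_rho hγ hγ2.le ho x o)).2
  have h2 := (abs_sub_le_iff.1 (rpow_sub_le_rho hγ hγ2.le ho x y)).1
  have h3 : AntiTree.rho (gammaSphere γ) x y ≤ r := hy
  rw [ho, Nat.cast_zero, zero_add, Real.one_rpow] at h1
  rw [one_div, Real.le_rpow_inv_iff_of_pos (by positivity) (by positivity) hβ]
  linarith

end GammaSphere

theorem rpow_mean_bounds {ι : Type*} {F : Finset ι} (hF : F.Nonempty) {f : ι → ℝ} {p q Q : ℝ}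
    (hp : 1 ≤ p) (hf : ∀ i ∈ F, 0 ≤ f i) (hq : 0 ≤ q) (hQ : ∀ i ∈ F, f i ≤ Q)
    (h : (F.card : ℝ) / 2 * q ^ p ≤ ∑ i ∈ F, f i ^ p) :
    q / 2 ≤ ((1 / (F.card : ℝ)) * ∑ i ∈ F, f i ^ p) ^ (1 / p) ∧
      ((1 / (F.card : ℝ)) * ∑ i ∈ F, f i ^ p) ^ (1 / p) ≤ Q := by
  have hp0 : 0 < p := by linarith
  have hc : (0 : ℝ) < F.card := by exact_mod_cast hF.card_pos
  have hS : 0 ≤ ∑ i ∈ F, f i ^ p := Finset.sum_nonneg fun i hi => Real.rpow_nonneg (hf i hi) p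
  obtain ⟨i₀, hi₀⟩ := hF
  have hQ0 : 0 ≤ Q := (hf i₀ hi₀).trans (hQ i₀ hi₀)
  rw [one_div_mul_eq_div, one_div]
  constructor
  · rw [Real.le_rpow_inv_iff_of_pos (by positivity) (by positivity) hp0, le_div_iff₀ hc,
      Real.div_rpow hq (by norm_num)]
    have h2 : (2 : ℝ) ≤ 2 ^ p := by
      simpa using Real.rpow_le_rpow_of_exponent_le (by norm_num : (1 : ℝ) ≤ 2) hp
    refine le_trans ?_ h
    calc q ^ p / 2 ^ p * F.card ≤ q ^ p / 2 * F.card := by gcongr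
      _ = F.card / 2 * q ^ p := by ring
  · rw [Real.rpow_inv_le_iff_of_pos (by positivity) hQ0 hp0, div_le_iff₀ hc, mul_comm,
      ← nsmul_eq_mul]
    exact Finset.sum_le_card_nsmul _ _ _ fun i hi => Real.rpow_le_rpow (hf i hi) (hQ i hi) hp0.le

/-- **Mean degree estimate on anti-trees.**
For `γ ∈ (0,2)`, `p ∈ [1,∞)` and the `γ`-anti-tree with root `o`, counting measure
`m ≡ 1` and intrinsic degree path metric `ρ`, there is `C ≥ 1` such that for all vertices
`x` and all `r ≥ max(1, ρ(x,o))`: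
`C⁻¹ r^{2γ/(2-γ)} ≤ D_p(x,r) ≤ C r^{2γ/(2-γ)}`,
where `D_p(x,r) = ((1/#B_x(r)) ∑_{y ∈ B_x(r)} Deg(y)^p)^{1/p}`. -/
theorem gammaAntiTree_mean_degree (γ : ℝ) (hγ0 : 0 < γ) (hγ2 : γ < 2)
    (p : ℝ) (hp : 1 ≤ p) (o : AntiTree (gammaSphere γ)) (ho : o.1 = 0) :
    ∃ C : ℝ, 1 ≤ C ∧ ∀ x : AntiTree (gammaSphere γ), ∀ r : ℝ,
      max 1 (AntiTree.rho (gammaSphere γ) x o) ≤ r →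
      C⁻¹ * r ^ (2 * γ / (2 - γ)) ≤
          ((1 / ((AntiTree.ball (gammaSphere γ) x r).ncard : ℝ)) *
              ∑' y : AntiTree (gammaSphere γ),
                Set.indicator (AntiTree.ball (gammaSphere γ) x r)
                  (fun y => AntiTree.Deg (gammaSphere γ) y ^ p) y) ^ (1 / p) ∧
      ((1 / ((AntiTree.ball (gammaSphere γ) x r).ncard : ℝ)) *
              ∑' y : AntiTree (gammaSphere γ),
                Set.indicator (AntiTree.ball (gammaSphere γ) x r)
                  (fun y => AntiTree.Deg (gammaSphere γ) y ^ p) y) ^ (1 / p) ≤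
          C * r ^ (2 * γ / (2 - γ)) := by
  have hγ := hγ0.le
  have hβ : 0 < 1 - γ / 2 := by linarith
  set δ := 2 * γ / (2 - γ) with hδ
  have hδβ : 1 / (1 - γ / 2) * γ = δ := by
    rw [hδ]
    have : 2 - γ ≠ 0 := by linarith
    field_simp
  have hδ0 : 0 ≤ δ := by rw [← hδβ]; positivity
  set c : ℝ := ((1 - γ / 2) / 4) ^ δ / 8 ^ γ / 4 with hc
  have hc0 : 0 < c := by positivity
  have h13 : (1 : ℝ) ≤ 13 ^ δ := Real.one_le_rpow (by norm_num) hδ0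
  have hcinv : 0 < c⁻¹ := inv_pos.2 hc0
  refine ⟨c⁻¹ + 18 * 13 ^ δ, by linarith, fun x r hr => ?_⟩
  have hr1 : 1 ≤ r := (le_max_left _ _).trans hr
  have hrx := (le_max_right _ _).trans hr
  have hr0 : 0 < r := by linarith
  have hlevel := fun y => add_one_le_of_mem_ball (y := y) hγ hγ2 ho hr1 hrx
  have hfin : (AntiTree.ball (gammaSphere γ) x r).Finite := by
    refine (Finset.finite_toSet (AntiTree.spheres (gammaSphere γ)
      (Finset.range ⌊(13 * r) ^ (1 / (1 - γ / 2))⌋₊))).subset fun y hy => ?_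
    rw [Finset.mem_coe, AntiTree.mem_spheres, Finset.mem_range]
    exact Nat.le_floor (by exact_mod_cast hlevel y hy)
  obtain ⟨F, hF⟩ := hfin.exists_finset_coe
  have hF0 : F.Nonempty := by
    refine ⟨x, ?_⟩
    rw [← Finset.mem_coe, hF]
    exact (pathMetric_le (IsPathLength.refl x)).trans hr0.le
  have hsum : ∑' y : AntiTree (gammaSphere γ),
      Set.indicator (AntiTree.ball (gammaSphere γ) x r)
        (fun y => AntiTree.Deg (gammaSphere γ) y ^ p) y =
      ∑ y ∈ F, AntiTree.Deg (gammaSphere γ) y ^ p := by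
    rw [← hF, ← tsum_subtype]
    exact Finset.tsum_subtype F fun y => AntiTree.Deg (gammaSphere γ) y ^ p
  rw [hsum, ← hF, Set.ncard_coe_finset]
  set K : ℝ := (r * ((1 - γ / 2) / 4)) ^ (1 / (1 - γ / 2)) with hK
  have hK0 : 0 ≤ K := by positivity
  have hKβ : 4 / (1 - γ / 2) * K ^ (1 - γ / 2) ≤ r := by
    rw [hK, ← Real.rpow_mul (by positivity), one_div_mul_cancel hβ.ne', Real.rpow_one]
    rw [mul_left_comm, div_mul_div_cancel₀ hβ.ne', div_self four_ne_zero, mul_one]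
  have hlow : (K / 8) ^ γ / 2 / 2 = c * r ^ δ := by
    rw [Real.div_rpow hK0 (by norm_num), hK, ← Real.rpow_mul (by positivity), hδβ,
      Real.mul_rpow hr0.le (by positivity), hc]
    ring
  have hup : ∀ y ∈ F, AntiTree.Deg (gammaSphere γ) y ≤ 18 * 13 ^ δ * r ^ δ := by
    intro y hy
    rw [← Finset.mem_coe, hF] at hy
    calc AntiTree.Deg (gammaSphere γ) y
        ≤ 18 * ((13 * r) ^ (1 / (1 - γ / 2))) ^ γ :=
          (Deg_le_mul_rpow hγ hγ2.le y (t := (y.1 : ℝ) + 1) (by simp)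
            (by linarith [(y.1).cast_nonneg (α := ℝ)])).trans
            (by gcongr; exact hlevel y hy)
      _ = 18 * 13 ^ δ * r ^ δ := by
        rw [← Real.rpow_mul (by positivity), hδβ, Real.mul_rpow (by norm_num) hr0.le, mul_assoc]
  obtain ⟨h1, h2⟩ := rpow_mean_bounds hF0 hp (fun y _ => (Deg_pos hγ y).le)
    (by positivity) hup (half_card_mul_le_sum_Deg hγ (by linarith) hK0
      (volume_le_card_of_eq_ball hγ hγ2 hF0 hF hK0 hKβ))
  constructor
  · refine le_trans ?_ h1
    rw [hlow]
    gcongr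
    exact inv_le_of_inv_le₀ hc0 (by linarith)
  · refine h2.trans ?_
    gcongr
    linarith
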